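/- Let Q be a tree quiver, V a representation of Q over a field K, and x₀ a fixed vertex. Let Hom(𝟙,V) = { (v_x)_{x∈Q₀} ∈ Π_x V_x : V_a(v_{ta}) = v_{ha} for all arrows a } and Hom(V,𝟙) = { (g_x)_{x∈Q₀} with g_x ∈ V_x^* : g_{ha}∘V_a = g_{ta} for all arrows a }. Define the linear map η : Hom(𝟙,V) → Hom(V,𝟙)^* by η((v_x))((g_x)) = g_{x₀}(v_{x₀}) (this value is independent of the choice of x₀). Then rank η = dim_K (rkf V)_{x₀}. -/

import Mathlib

open Submodule

section Defs

variable {K : Type} [Field K]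
variable {Q₀ Q₁ : Type} (tl hd : Q₁ → Q₀)
variable (Vx : Q₀ → Type) [∀ x, AddCommGroup (Vx x)] [∀ x, Module K (Vx x)]
variable (Va : ∀ a : Q₁, Vx (tl a) →ₗ[K] Vx (hd a))

/-- `U` is a subrepresentation of the representation `(Vx, Va)`. -/
def IsSubrep (U : ∀ x, Submodule K (Vx x)) : Prop :=
  ∀ a : Q₁, (U (tl a)).map (Va a) ≤ U (hd a)

/-- `U` is an epimorphic subrepresentation: `V_a(U_{ta}) = U_{ha}` for every arrow. -/
def IsEpiSub (U : ∀ x, Submodule K (Vx x)) : Prop :=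
  ∀ a : Q₁, (U (tl a)).map (Va a) = U (hd a)

/-- `N` is a coclosed subrepresentation: it is a subrepresentation and
`V_a⁻¹(N_{ha}) ⊆ N_{ta}` for every arrow. -/
def IsCoclosedSub (N : ∀ x, Submodule K (Vx x)) : Prop :=
  IsSubrep tl hd Vx Va N ∧ ∀ a : Q₁, (N (hd a)).comap (Va a) ≤ N (tl a)

/-- `Γ(V)`, the sum of all epimorphic subrepresentations. -/
def Gamma (x : Q₀) : Submodule K (Vx x) :=
  ⨆ U : {U : ∀ y, Submodule K (Vx y) // IsEpiSub tl hd Vx Va U}, U.1 x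

/-- `Δ(V)`, the intersection of all coclosed subrepresentations. -/
def Delta (x : Q₀) : Submodule K (Vx x) :=
  ⨅ N : {N : ∀ y, Submodule K (Vx y) // IsCoclosedSub tl hd Vx Va N}, N.1 x

lemma le_gamma {U : ∀ y, Submodule K (Vx y)} (hU : IsEpiSub tl hd Vx Va U) (x : Q₀) :
    U x ≤ Gamma tl hd Vx Va x :=
  le_iSup (fun (W : {U // IsEpiSub tl hd Vx Va U}) => W.1 x) ⟨U, hU⟩

lemma delta_le {N : ∀ y, Submodule K (Vx y)} (hN : IsCoclosedSub tl hd Vx Va N) (x : Q₀) :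
    Delta tl hd Vx Va x ≤ N x :=
  iInf_le (fun (W : {N // IsCoclosedSub tl hd Vx Va N}) => W.1 x) ⟨N, hN⟩

lemma gamma_epi : IsEpiSub tl hd Vx Va (Gamma tl hd Vx Va) := by
  intro a
  apply le_antisymm
  · rw [Gamma, Submodule.map_iSup]
    refine iSup_le fun U => ?_
    rw [U.2 a]
    exact le_gamma tl hd Vx Va U.2 (hd a)
  · refine iSup_le fun U => ?_
    rw [← U.2 a]
    exact Submodule.map_mono (le_gamma tl hd Vx Va U.2 (tl a))

lemma gamma_subrep : IsSubrep tl hd Vx Va (Gamma tl hd Vx Va) :=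
  fun a => le_of_eq (gamma_epi tl hd Vx Va a)

lemma delta_subrep : IsSubrep tl hd Vx Va (Delta tl hd Vx Va) := by
  intro a
  have : ∀ N : {N // IsCoclosedSub tl hd Vx Va N},
      (Delta tl hd Vx Va (tl a)).map (Va a) ≤ N.1 (hd a) :=
    fun N => le_trans (Submodule.map_mono (delta_le tl hd Vx Va N.2 (tl a))) (N.2.1 a)
  exact le_iInf this

/-- `Γ(V) + Δ(V)` pointwise. -/
abbrev GD (x : Q₀) : Submodule K (Vx x) := Gamma tl hd Vx Va x ⊔ Delta tl hd Vx Va x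

/-- `Δ(V)`, seen inside `Γ(V) + Δ(V)`. -/
abbrev rkfDen (x : Q₀) : Submodule K (GD tl hd Vx Va x) :=
  (Delta tl hd Vx Va x).comap (GD tl hd Vx Va x).subtype

/-- The vertex spaces `(Γ(V)_x + Δ(V)_x)/Δ(V)_x` of the global tensor functor. -/
abbrev rkfSpace (x : Q₀) : Type :=
  GD tl hd Vx Va x ⧸ rkfDen tl hd Vx Va x

lemma gd_mapsTo (a : Q₁) : ∀ v ∈ GD tl hd Vx Va (tl a), Va a v ∈ GD tl hd Vx Va (hd a) := by
  intro v hv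
  have : (GD tl hd Vx Va (tl a)).map (Va a) ≤ GD tl hd Vx Va (hd a) := by
    rw [Submodule.map_sup]
    exact sup_le_sup (gamma_subrep tl hd Vx Va a) (delta_subrep tl hd Vx Va a)
  exact this ⟨v, hv, rfl⟩

/-- The arrow maps of the global tensor functor, induced by the `V_a`. -/
def rkfMap (a : Q₁) : rkfSpace tl hd Vx Va (tl a) →ₗ[K] rkfSpace tl hd Vx Va (hd a) :=
  Submodule.liftQ _
    ((rkfDen tl hd Vx Va (hd a)).mkQ ∘ₗ (Va a).restrict (gd_mapsTo tl hd Vx Va a))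
    (by
      intro v hv
      simp only [LinearMap.mem_ker, LinearMap.comp_apply, Submodule.mkQ_apply,
        Submodule.Quotient.mk_eq_zero]
      have hv' : (v : Vx (tl a)) ∈ Delta tl hd Vx Va (tl a) := hv
      show (Va a) (v : Vx (tl a)) ∈ Delta tl hd Vx Va (hd a)
      exact delta_subrep tl hd Vx Va a ⟨(v : Vx (tl a)), hv', rfl⟩)

/-- Isomorphism of quiver representations. -/
def RepIso (Wx : Q₀ → Type) [∀ x, AddCommGroup (Wx x)] [∀ x, Module K (Wx x)]
    (Wa : ∀ a : Q₁, Wx (tl a) →ₗ[K] Wx (hd a)) : Prop :=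
  ∃ φ : ∀ x, Vx x ≃ₗ[K] Wx x, ∀ (a : Q₁) (v : Vx (tl a)), φ (hd a) (Va a v) = Wa a (φ (tl a) v)

end Defs

section Tree

variable {K : Type} [Field K]
variable {Q₀ Q₁ : Type} (tl hd : Q₁ → Q₀)
variable (Vx : Q₀ → Type) [∀ x, AddCommGroup (Vx x)] [∀ x, Module K (Vx x)]
variable (Va : ∀ a : Q₁, Vx (tl a) →ₗ[K] Vx (hd a))

/-- `Hom(𝟙, V)`: families `(v_x)` with `V_a(v_{ta}) = v_{ha}` for all arrows. -/
def limSub : Submodule K (∀ x, Vx x) where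
  carrier := {v | ∀ a : Q₁, Va a (v (tl a)) = v (hd a)}
  add_mem' := by
    intro u v hu hv a
    simp only [Pi.add_apply, map_add, hu a, hv a]
  zero_mem' := by
    intro a
    simp
  smul_mem' := by
    intro c v hv a
    simp only [Pi.smul_apply, map_smul, hv a]

/-- `Hom(V, 𝟙)`: families `(g_x)` of functionals with `g_{ha} ∘ V_a = g_{ta}` for all arrows. -/
def colimSub : Submodule K (∀ x, Module.Dual K (Vx x)) where
  carrier := {g | ∀ a : Q₁, (g (hd a)).comp (Va a) = g (tl a)}
  add_mem' := by
    intro u v hu hv a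
    simp only [Pi.add_apply, LinearMap.add_comp, hu a, hv a]
  zero_mem' := by
    intro a
    simp
  smul_mem' := by
    intro c v hv a
    simp only [Pi.smul_apply, LinearMap.smul_comp, hv a]

/-- The natural pairing map `η : Hom(𝟙,V) → Hom(V,𝟙)^*`, `η(v)(g) = g_{x₀}(v_{x₀})`. -/
def etaMap (x₀ : Q₀) : limSub tl hd Vx Va →ₗ[K] Module.Dual K (colimSub tl hd Vx Va) where
  toFun v :=
    { toFun := fun g => g.1 x₀ (v.1 x₀)
      map_add' := fun g g' => rfl
      map_smul' := fun c g => rfl }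
  map_add' := by
    intro u v
    ext g
    simp
  map_smul' := by
    intro c v
    ext g
    simp

end Tree


/-- On a tree, local extendability along arrows gives global sections. -/
lemma tree_section {Q₀ Q₁ : Type} [Fintype Q₀] [Fintype Q₁]
    (tl hd : Q₁ → Q₀)
    (hconn : ∀ x y : Q₀, Relation.ReflTransGen
      (fun u v => ∃ a : Q₁, (tl a = u ∧ hd a = v) ∨ (hd a = u ∧ tl a = v)) x y)
    (htree : Fintype.card Q₀ = Fintype.card Q₁ + 1)
    (X : Q₀ → Type) (d : ∀ x, X x)
    (R : ∀ a : Q₁, X (tl a) → X (hd a) → Prop)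
    (h1 : ∀ a p, ∃ q, R a p q) (h2 : ∀ a q, ∃ p, R a p q)
    (x₀ : Q₀) (p : X x₀) :
    ∃ s : ∀ x, X x, s x₀ = p ∧ ∀ a, R a (s (tl a)) (s (hd a)) := by
  classical
  have key : ∀ n, n + 1 ≤ Fintype.card Q₀ → ∃ (S : Finset Q₀) (E : Finset Q₁) (s : ∀ x, X x),
      S.card = n + 1 ∧ E.card = n ∧ (∀ a ∈ E, tl a ∈ S ∧ hd a ∈ S) ∧ x₀ ∈ S ∧ s x₀ = p ∧
      ∀ a ∈ E, R a (s (tl a)) (s (hd a)) := by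
    intro n
    induction n with
    | zero =>
      intro _
      exact ⟨{x₀}, ∅, Function.update d x₀ p, by simp, by simp, by simp, by simp, by simp, by simp⟩
    | succ n ih =>
      intro hn
      obtain ⟨S, E, s, hS, hE, hES, hx, hs, hR⟩ := ih (by omega)
      have hcross : ∃ a, (tl a ∈ S ∧ hd a ∉ S) ∨ (hd a ∈ S ∧ tl a ∉ S) := by
        by_contra hno
        push Not at hno
        have hall : ∀ y, y ∈ S := by
          intro y
          induction hconn x₀ y with
          | refl => exact hx
          | tail _ h ih =>
            obtain ⟨a, ⟨rfl, rfl⟩ | ⟨rfl, rfl⟩⟩ := h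
            · exact (hno a).1 ih
            · exact (hno a).2 ih
        have : S = Finset.univ := Finset.eq_univ_iff_forall.2 hall
        rw [this, Finset.card_univ] at hS
        omega
      have step : ∀ (a : Q₁) (y : Q₀) (q : X y), y ∉ S → a ∉ E →
          (tl a ∈ insert y S ∧ hd a ∈ insert y S) →
          R a (Function.update s y q (tl a)) (Function.update s y q (hd a)) →
          ∃ (S : Finset Q₀) (E : Finset Q₁) (s : ∀ x, X x),
      S.card = n + 1 + 1 ∧ E.card = n + 1 ∧ (∀ a ∈ E, tl a ∈ S ∧ hd a ∈ S) ∧ x₀ ∈ S ∧ s x₀ = p ∧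
      ∀ a ∈ E, R a (s (tl a)) (s (hd a)) := by
        intro a y q hy ha hends hRa
        have hne : ∀ z ∈ S, z ≠ y := fun z hz h => hy (h ▸ hz)
        refine ⟨insert y S, insert a E, Function.update s y q, ?_, ?_, ?_, ?_, ?_, ?_⟩
        · rw [Finset.card_insert_of_notMem hy, hS]
        · rw [Finset.card_insert_of_notMem ha, hE]
        · intro b hb
          rcases Finset.mem_insert.1 hb with rfl | hb
          · exact hends
          · exact ⟨Finset.mem_insert_of_mem (hES b hb).1, Finset.mem_insert_of_mem (hES b hb).2⟩
        · exact Finset.mem_insert_of_mem hx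
        · rw [Function.update_of_ne (hne _ hx), hs]
        · intro b hb
          rcases Finset.mem_insert.1 hb with rfl | hb
          · exact hRa
          · rw [Function.update_of_ne (hne _ (hES b hb).1),
              Function.update_of_ne (hne _ (hES b hb).2)]
            exact hR b hb
      obtain ⟨a, ⟨hin, hout⟩ | ⟨hin, hout⟩⟩ := hcross
      · obtain ⟨q, hq⟩ := h1 a (s (tl a))
        refine step a (hd a) q hout (fun h => hout (hES a h).2) (by simp [hin]) ?_
        rw [Function.update_of_ne (show tl a ≠ hd a from fun h => hout (h ▸ hin)), Function.update_self]
        exact hq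
      · obtain ⟨q, hq⟩ := h2 a (s (hd a))
        refine step a (tl a) q hout (fun h => hout (hES a h).1) (by simp [hin]) ?_
        rw [Function.update_of_ne (show hd a ≠ tl a from fun h => hout (h ▸ hin)), Function.update_self]
        exact hq
  obtain ⟨S, E, s, hS, hE, hES, hx, hs, hR⟩ := key (Fintype.card Q₁) (by omega)
  have : E = Finset.univ := (Finset.card_eq_iff_eq_univ E).1 hE
  exact ⟨s, hs, fun a => hR a (this ▸ Finset.mem_univ a)⟩

lemma delta_comap {K : Type} [Field K] {Q₀ Q₁ : Type} (tl hd : Q₁ → Q₀)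
    (Vx : Q₀ → Type) [∀ x, AddCommGroup (Vx x)] [∀ x, Module K (Vx x)]
    (Va : ∀ a : Q₁, Vx (tl a) →ₗ[K] Vx (hd a)) (a : Q₁) :
    (Delta tl hd Vx Va (hd a)).comap (Va a) ≤ Delta tl hd Vx Va (tl a) :=
  le_iInf fun N => le_trans (Submodule.comap_mono (delta_le tl hd Vx Va N.2 (hd a))) (N.2.2 a)

/-- on a tree quiver (connected, with one fewer arrow than vertices),
the rank of the natural pairing map `η : Hom(𝟙,V) → Hom(V,𝟙)^*` equals
`dim_K (rkf V)_{x₀}` (for any base vertex `x₀`). -/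
theorem stmt_10 {K : Type} [Field K] {Q₀ Q₁ : Type} [Fintype Q₀] [Fintype Q₁]
    (tl hd : Q₁ → Q₀)
    (hconn : ∀ x y : Q₀, Relation.ReflTransGen
      (fun u v => ∃ a : Q₁, (tl a = u ∧ hd a = v) ∨ (hd a = u ∧ tl a = v)) x y)
    (htree : Fintype.card Q₀ = Fintype.card Q₁ + 1)
    (Vx : Q₀ → Type) [∀ x, AddCommGroup (Vx x)] [∀ x, Module K (Vx x)]
    [∀ x, FiniteDimensional K (Vx x)]
    (Va : ∀ a : Q₁, Vx (tl a) →ₗ[K] Vx (hd a)) :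
    ∀ x₀ : Q₀,
      Module.finrank K (LinearMap.range (etaMap tl hd Vx Va x₀))
        = Module.finrank K (rkfSpace tl hd Vx Va x₀) := by
  intro x₀
  -- values of global sections lie in Gamma
  have hG1 : ∀ v ∈ limSub tl hd Vx Va, v x₀ ∈ Gamma tl hd Vx Va x₀ := by
    intro v hv
    refine le_gamma tl hd Vx Va (U := fun x => Submodule.span K {v x}) ?_ x₀
      (Submodule.mem_span_singleton_self _)
    intro a
    rw [Submodule.map_span, Set.image_singleton, hv a]
  have hG2 : ∀ w ∈ Gamma tl hd Vx Va x₀, ∃ v ∈ limSub tl hd Vx Va, v x₀ = w := by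
    intro w hw
    obtain ⟨s, hs, hR⟩ := tree_section tl hd hconn htree
      (fun x => Gamma tl hd Vx Va x) (fun x => 0)
      (fun a p q => Va a p.1 = q.1)
      (fun a p => ⟨⟨Va a p.1, gamma_subrep tl hd Vx Va a ⟨_, p.2, rfl⟩⟩, rfl⟩)
      (fun a q => by
        obtain ⟨p, hp, hpq⟩ := (gamma_epi tl hd Vx Va a).ge q.2
        exact ⟨⟨p, hp⟩, hpq⟩) x₀ ⟨w, hw⟩
    exact ⟨fun x => (s x).1, fun a => hR a, by simp [hs]⟩
  have hD1 : ∀ g ∈ colimSub tl hd Vx Va, Delta tl hd Vx Va x₀ ≤ LinearMap.ker (g x₀) := by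
    intro g hg
    refine delta_le tl hd Vx Va (N := fun x => LinearMap.ker (g x)) ⟨?_, ?_⟩ x₀
    · rintro a _ ⟨v, hv, rfl⟩
      have := LinearMap.congr_fun (hg a) v
      simp only [LinearMap.comp_apply] at this
      rw [LinearMap.mem_ker, this]
      exact hv
    · intro a v hv
      have := LinearMap.congr_fun (hg a) v
      simp only [LinearMap.comp_apply] at this
      rw [LinearMap.mem_ker, ← this]
      exact hv
  have hD2 : ∀ f ∈ (Delta tl hd Vx Va x₀).dualAnnihilator,
      ∃ g ∈ colimSub tl hd Vx Va, g x₀ = f := by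
    intro f hf
    obtain ⟨s, hs, hR⟩ := tree_section tl hd hconn htree
      (fun x => (Delta tl hd Vx Va x).dualAnnihilator) (fun x => 0)
      (fun a p q => q.1.comp (Va a) = p.1)
      (fun a p => by
        have hp : p.1 ∈ (LinearMap.ker ((Delta tl hd Vx Va (hd a)).mkQ ∘ₗ Va a)).dualAnnihilator := by
          refine Submodule.dualAnnihilator_anti ?_ p.2
          rw [LinearMap.ker_comp, Submodule.ker_mkQ]
          exact delta_comap tl hd Vx Va a
        rw [← LinearMap.range_dualMap_eq_dualAnnihilator_ker] at hp
        obtain ⟨h, hh⟩ := hp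
        refine ⟨⟨h ∘ₗ (Delta tl hd Vx Va (hd a)).mkQ, ?_⟩, ?_⟩
        · rw [Submodule.mem_dualAnnihilator]
          intro w hw
          rw [LinearMap.comp_apply, Submodule.mkQ_apply, (Submodule.Quotient.mk_eq_zero _).2 hw,
            map_zero]
        · rw [← hh]; rfl)
      (fun a q => ⟨⟨q.1.comp (Va a), by
        rw [Submodule.mem_dualAnnihilator]
        intro w hw
        exact (Submodule.mem_dualAnnihilator _).1 q.2 _
          (delta_subrep tl hd Vx Va a ⟨w, hw, rfl⟩)⟩, rfl⟩) x₀ ⟨f, hf⟩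
    exact ⟨fun x => (s x).1, fun a => hR a, by simp [hs]⟩
  -- the evaluation map onto the rkf space
  let ev : limSub tl hd Vx Va →ₗ[K] GD tl hd Vx Va x₀ :=
    LinearMap.codRestrict _ ((LinearMap.proj x₀).comp (limSub tl hd Vx Va).subtype)
      (fun v => Submodule.mem_sup_left (hG1 v.1 v.2))
  let π : limSub tl hd Vx Va →ₗ[K] rkfSpace tl hd Vx Va x₀ := (rkfDen tl hd Vx Va x₀).mkQ ∘ₗ ev
  have hπ : LinearMap.range π = ⊤ := by
    rw [LinearMap.range_eq_top]
    intro z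
    obtain ⟨⟨w, hw⟩, rfl⟩ := Submodule.mkQ_surjective _ z
    obtain ⟨u, hu, t, ht, rfl⟩ := Submodule.mem_sup.1 hw
    obtain ⟨v, hv, hvu⟩ := hG2 u hu
    refine ⟨⟨v, hv⟩, ?_⟩
    refine (Submodule.Quotient.eq _).2 ?_
    change v x₀ - (u + t) ∈ Delta tl hd Vx Va x₀
    rw [hvu]
    simpa using ht
  have hker : LinearMap.ker (etaMap tl hd Vx Va x₀) = LinearMap.ker π := by
    ext v
    have e2 : v ∈ LinearMap.ker π ↔ v.1 x₀ ∈ Delta tl hd Vx Va x₀ :=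
      Submodule.Quotient.mk_eq_zero (rkfDen tl hd Vx Va x₀) (x := ev v)
    rw [e2, LinearMap.mem_ker]
    constructor
    · intro h
      rw [← Subspace.forall_mem_dualAnnihilator_apply_eq_zero_iff]
      intro f hf
      obtain ⟨g, hg, rfl⟩ := hD2 f hf
      exact LinearMap.congr_fun h ⟨g, hg⟩
    · intro h
      ext g
      exact hD1 g.1 g.2 h
  rw [← (etaMap tl hd Vx Va x₀).quotKerEquivRange.finrank_eq, hker,
    π.quotKerEquivRange.finrank_eq, hπ, finrank_top]
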